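/- If M is a stochastic matrix that is reversible with respect to a strictly positive distribution and satisfies M^{m+δ} = M^m for all positive integers δ for some m ≥ 1, then M is idempotent: M² = M. -/

import Mathlib

theorem aux_sq_zero {n : ℕ} (A : Matrix (Fin n) (Fin n) ℝ) (d : Fin n → ℝ) (hd : ∀ i, 0 < d i)
    (hA : A * Matrix.diagonal d = Matrix.diagonal d * A.transpose) (h0 : A * A = 0) : A = 0 := by
  have h1 : A * (Matrix.diagonal d * A.transpose) = 0 := by
    rw [← hA, ← mul_assoc, h0, zero_mul]
  ext i j
  have h2 : ∑ k, A i k * (d k * A i k) = 0 := by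
    have := congrFun (congrFun h1 i) i
    rw [Matrix.mul_apply] at this
    simpa [Matrix.diagonal_mul] using this
  have h3 := (Finset.sum_eq_zero_iff_of_nonneg (fun k _ => by
    have := mul_nonneg (hd k).le (mul_self_nonneg (A i k))
    linarith)).1 h2 j (Finset.mem_univ j)
  have := (hd j).ne'
  simpa [this] using h3

theorem stmt_15 {n : ℕ} (M : Matrix (Fin n) (Fin n) ℝ)
    (hnn : ∀ i j, 0 ≤ M i j) (hrow : ∀ i, ∑ j, M i j = 1)
    (d : Fin n → ℝ) (hd : ∀ i, 0 < d i)
    (hrev : (Matrix.diagonal d)⁻¹ * M * Matrix.diagonal d = Matrix.transpose M)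
    (m : ℕ) (hm : 1 ≤ m) (h : ∀ δ : ℕ, 1 ≤ δ → M ^ (m + δ) = M ^ m) :
    M * M = M := by
  have hu : IsUnit (Matrix.diagonal d).det := by
    rw [Matrix.det_diagonal, isUnit_iff_ne_zero]
    exact Finset.prod_ne_zero_iff.2 fun i _ => (hd i).ne'
  have hs : SemiconjBy (Matrix.diagonal d) M.transpose M := by
    unfold SemiconjBy
    rw [← hrev, mul_assoc, Matrix.mul_nonsing_inv_cancel_left _ _ hu]
  have key : ∀ k : ℕ, M ^ (k + 2) - M ^ (k + 1) = 0 → M ^ 2 - M ^ 1 = 0 := by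
    intro k
    induction k with
    | zero => exact id
    | succ k ih =>
      intro hk
      apply ih
      apply aux_sq_zero _ d hd
      · have := (hs.pow_right (k + 2)).sub_right (hs.pow_right (k + 1))
        simpa [Matrix.transpose_pow] using this.eq.symm
      · have : (M ^ (k + 2) - M ^ (k + 1)) * (M ^ (k + 2) - M ^ (k + 1))
          = (M ^ (k + 1 + 2) - M ^ (k + 1 + 1)) * (M ^ (k + 1) - M ^ k) := by
          simp only [sub_mul, mul_sub, ← pow_add]
          ring_nf
        rw [this, hk, zero_mul]
  obtain ⟨k, rfl⟩ : ∃ k, m = k + 1 := ⟨m - 1, by omega⟩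
  have := key k (sub_eq_zero.2 (h 1 le_rfl))
  simpa [pow_two] using sub_eq_zero.1 this
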